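/- Let R : [0,∞)×[0,∞) → ℝ be a covariance function satisfying condition (H1). If (μ_t)_{t≥0} and (ν_t)_{t≥0} are two weakly continuous families of Borel probability measures on ℝ that both solve the measure-flow equation for R, and μ_0 = ν_0, then μ_t = ν_t for every t ≥ 0. -/

import Mathlib

open MeasureTheory

/-- Condition (H1): for every `T > 0`, `s ↦ R(s,s)` is `C¹` on `(0,∞)`, continuous at `0`, its
derivative has finitely many zeros in `(0,T]`, and there is `α > 1` such that for all
`t ∈ [0,T]` the map `s ↦ R(s,t)` is absolutely continuous on `[0,T]` (expressed via the
fundamental theorem of calculus with an integrable integrand `∂R/∂s`) with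
`sup_{0≤t≤T} ∫_0^T |∂R/∂s(s,t)|^α ds < ∞`. -/
def CondH1 (R : ℝ → ℝ → ℝ) : Prop :=
  ContDiffOn ℝ 1 (fun s => R s s) (Set.Ioi 0) ∧
  ContinuousWithinAt (fun s => R s s) (Set.Ici 0) 0 ∧
  (∀ T > (0 : ℝ), {s ∈ Set.Ioc (0 : ℝ) T | deriv (fun u => R u u) s = 0}.Finite) ∧
  (∀ T > (0 : ℝ), ∃ α > (1 : ℝ), ∃ dR : ℝ → ℝ → ℝ, ∃ C : ℝ,
    ∀ t ∈ Set.Icc (0 : ℝ) T,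
      IntervalIntegrable (fun s => dR s t) volume 0 T ∧
      (∀ s ∈ Set.Icc (0 : ℝ) T, R s t = R 0 t + ∫ u in (0 : ℝ)..s, dR u t) ∧
      ∫⁻ s in Set.Ioc (0 : ℝ) T, ENNReal.ofReal (|dR s t| ^ α) ≤ ENNReal.ofReal C)

/-- `f ∈ C_b³(ℝ)`: three times continuously differentiable with `f` and its first three
derivatives bounded. -/
def IsCb3 (f : ℝ → ℝ) : Prop :=
  ContDiff ℝ 3 f ∧ ∀ k : ℕ, k ≤ 3 → ∃ C : ℝ, ∀ x : ℝ, |iteratedDeriv k f x| ≤ C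

/-- The difference quotient `(f′(x) − f′(y))/(x − y)`, interpreted as `f″(x)` on the diagonal. -/
noncomputable def diffQuot (f : ℝ → ℝ) (x y : ℝ) : ℝ :=
  if x = y then deriv (deriv f) x else (deriv f x - deriv f y) / (x - y)

/-- The measure-flow equation for `R`: for every `t ≥ 0` and every `f ∈ C_b³(ℝ)`,
`∫ f dμ_t = ∫ f dμ_0 + (1/2)∫_0^t (d/ds)R(s,s) ∫∫ (f′(x)−f′(y))/(x−y) dμ_s dμ_s ds`. -/
def SolvesFlow (R : ℝ → ℝ → ℝ) (μ : ℝ → ProbabilityMeasure ℝ) : Prop :=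
  ∀ t ≥ (0 : ℝ), ∀ f : ℝ → ℝ, IsCb3 f →
    ∫ x, f x ∂(μ t : Measure ℝ)
      = (∫ x, f x ∂(μ 0 : Measure ℝ))
        + (1 / 2) * ∫ s in (0 : ℝ)..t,
            deriv (fun u => R u u) s *
              ∫ x, ∫ y, diffQuot f x y ∂(μ s : Measure ℝ) ∂(μ s : Measure ℝ)

/-- The real trigonometric function `x ↦ Re (c e^{iux})`. -/
noncomputable def trigRe (c : ℂ) (u : ℝ) (x : ℝ) : ℝ :=
  (c * Complex.exp (u * x * Complex.I)).re

lemma abs_trigRe_le (c : ℂ) (u x : ℝ) : |trigRe c u x| ≤ ‖c‖ := by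
  refine (Complex.abs_re_le_norm _).trans ?_
  rw [norm_mul, ← Complex.ofReal_mul, Complex.norm_exp_ofReal_mul_I, mul_one]

lemma hasDerivAt_trigRe (c : ℂ) (u x : ℝ) :
    HasDerivAt (trigRe c u) (trigRe (c * (u * Complex.I)) u x) x := by
  have h : HasDerivAt (fun z : ℂ => c * Complex.exp (u * z * Complex.I))
      (c * (Complex.exp (u * x * Complex.I) * (u * 1 * Complex.I))) (x : ℂ) :=
    ((((hasDerivAt_id (x : ℂ)).const_mul (u : ℂ)).mul_const Complex.I).cexp).const_mul c
  have h' := h.real_of_complex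
  unfold trigRe
  convert! h' using 2
  ring

lemma deriv_trigRe (c : ℂ) (u : ℝ) :
    deriv (trigRe c u) = trigRe (c * (u * Complex.I)) u :=
  funext fun x => (hasDerivAt_trigRe c u x).deriv

lemma iteratedDeriv_trigRe (k : ℕ) (c : ℂ) (u : ℝ) :
    iteratedDeriv k (trigRe c u) = trigRe (c * (u * Complex.I) ^ k) u := by
  induction k with
  | zero => simp
  | succ k ih => rw [iteratedDeriv_succ, ih, deriv_trigRe, pow_succ, mul_assoc]

lemma contDiff_trigRe (n : WithTop ℕ∞) (c : ℂ) (u : ℝ) : ContDiff ℝ n (trigRe c u) := by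
  have h : ContDiff ℝ n fun x : ℝ => c * Complex.exp (u * x * Complex.I) := by
    have : ContDiff ℝ n fun x : ℝ => (x : ℂ) := Complex.ofRealCLM.contDiff
    exact contDiff_const.mul (((contDiff_const.mul this).mul contDiff_const).cexp)
  exact Complex.reCLM.contDiff.comp h

lemma isCb3_trigRe (c : ℂ) (u : ℝ) : IsCb3 (trigRe c u) :=
  ⟨contDiff_trigRe 3 c u, fun k _ => ⟨‖c * (u * Complex.I) ^ k‖, fun x => by
    rw [iteratedDeriv_trigRe]
    exact abs_trigRe_le _ _ _⟩⟩

lemma integral_trigRe (m : Measure ℝ) [IsProbabilityMeasure m] (c : ℂ) (u : ℝ) :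
    ∫ x, trigRe c u x ∂m = (c * charFun m u).re := by
  have hint : Integrable (fun x : ℝ => c * Complex.exp (u * x * Complex.I)) m := by
    refine Integrable.of_bound (by fun_prop) ‖c‖ (.of_forall fun x => ?_)
    rw [norm_mul, ← Complex.ofReal_mul, Complex.norm_exp_ofReal_mul_I, mul_one]
  rw [charFun_apply_real, ← integral_const_mul]
  exact integral_re hint

/-- The difference quotient of a trigonometric function, written by the fundamental theorem of
calculus along the segment between its two arguments. -/
lemma diffQuot_trigRe (c : ℂ) (u x y : ℝ) :
    diffQuot (trigRe c u) x y =
      ∫ θ in (0 : ℝ)..1, trigRe (c * (u * Complex.I) ^ 2) u (y + θ * (x - y)) := by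
  unfold diffQuot
  rw [deriv_trigRe, deriv_trigRe, mul_assoc, ← pow_two]
  split_ifs with h
  · simp [h]
  · have hxy : x - y ≠ 0 := sub_ne_zero.mpr h
    rw [div_eq_iff hxy, ← intervalIntegral.integral_mul_const]
    have hd : ∀ θ ∈ Set.uIcc (0 : ℝ) 1,
        HasDerivAt (fun θ : ℝ => trigRe (c * (u * Complex.I)) u (y + θ * (x - y)))
          (trigRe (c * (u * Complex.I) ^ 2) u (y + θ * (x - y)) * (x - y)) θ := by
      intro θ _
      have hl : HasDerivAt (fun θ : ℝ => y + θ * (x - y)) (x - y) θ := by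
        simpa using ((hasDerivAt_id θ).mul_const (x - y)).const_add y
      have := (hasDerivAt_trigRe (c * (u * Complex.I)) u (y + θ * (x - y))).comp θ hl
      rwa [mul_assoc, ← pow_two] at this
    have hc : Continuous (trigRe (c * (u * Complex.I) ^ 2) u) :=
      (contDiff_trigRe 0 _ u).continuous
    rw [intervalIntegral.integral_eq_sub_of_hasDerivAt hd
      (Continuous.intervalIntegrable (by fun_prop) _ _)]
    simp

/-- The self-convolution of the characteristic function of `m` along rays. -/
noncomputable def charConv (m : Measure ℝ) (u : ℝ) : ℂ :=
  ∫ θ in (0 : ℝ)..1, charFun m (θ * u) * charFun m ((1 - θ) * u)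

lemma integral_integral_diffQuot_trigRe (m : Measure ℝ) [IsProbabilityMeasure m] (c : ℂ) (u : ℝ) :
    ∫ x, ∫ y, diffQuot (trigRe c u) x y ∂m ∂m
      = (c * (u * Complex.I) ^ 2 * charConv m u).re := by
  set d := c * (u * Complex.I) ^ 2 with hd
  let e : ℝ → ℝ → ℂ := fun v x => Complex.exp (v * x * Complex.I)
  have he : ∀ v x, ‖e v x‖ = 1 := fun v x => by
    simp only [e]
    rw [← Complex.ofReal_mul, Complex.norm_exp_ofReal_mul_I]
  have hφ : ∀ v, ∫ x, e v x ∂m = charFun m v := fun v => (charFun_apply_real v).symm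
  have hφc : Continuous (charFun m) := continuous_charFun
  have hsplit : ∀ θ x y : ℝ,
      trigRe d u (y + θ * (x - y)) = (d * (e (θ * u) x * e ((1 - θ) * u) y)).re := by
    intro θ x y
    simp only [trigRe, e]
    rw [← Complex.exp_add]
    congr 3
    push_cast
    ring
  have hre : ∀ x y, diffQuot (trigRe c u) x y
      = (∫ θ in (0 : ℝ)..1, d * (e (θ * u) x * e ((1 - θ) * u) y)).re := by
    intro x y
    rw [diffQuot_trigRe, intervalIntegral.integral_of_le zero_le_one,
      intervalIntegral.integral_of_le zero_le_one]
    simp_rw [← hd, hsplit]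
    have hI : Integrable (fun θ : ℝ => d * (e (θ * u) x * e ((1 - θ) * u) y))
        (volume.restrict (Set.Ioc 0 1)) := by
      refine Integrable.of_bound (Continuous.aestronglyMeasurable ?_) ‖d‖ (.of_forall fun θ => ?_)
      · simp only [e]
        fun_prop
      · simp [he]
    exact integral_re hI
  let unitVol : Measure ℝ := volume.restrict (Set.Ioc 0 1)
  have hinner : ∀ x, ∫ y, diffQuot (trigRe c u) x y ∂m
      = (∫ θ in (0 : ℝ)..1, d * (e (θ * u) x * charFun m ((1 - θ) * u))).re := by
    intro x
    simp_rw [hre, intervalIntegral.integral_of_le zero_le_one]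
    have hI : Integrable
        (Function.uncurry fun (y θ : ℝ) => d * (e (θ * u) x * e ((1 - θ) * u) y))
        (m.prod unitVol) := by
      refine Integrable.of_bound (Continuous.aestronglyMeasurable ?_) ‖d‖ (.of_forall fun p => ?_)
      · simp only [Function.uncurry_def, e]
        fun_prop
      · simp [Function.uncurry_def, he]
    refine (integral_re hI.integral_prod_left).trans (congrArg Complex.re ?_)
    refine (integral_integral_swap hI).trans ?_
    simp_rw [integral_const_mul, hφ]
    rfl
  simp_rw [hinner, intervalIntegral.integral_of_le zero_le_one]
  have hI : Integrable
      (Function.uncurry fun (x θ : ℝ) => d * (e (θ * u) x * charFun m ((1 - θ) * u)))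
      (m.prod unitVol) := by
    refine Integrable.of_bound (Continuous.aestronglyMeasurable ?_) ‖d‖ (.of_forall fun p => ?_)
    · simp only [Function.uncurry_def, e]
      fun_prop
    · simp only [Function.uncurry_def, norm_mul, he, one_mul]
      exact mul_le_of_le_one_right (norm_nonneg _) (norm_charFun_le_one _)
  refine (integral_re hI.integral_prod_left).trans (congrArg Complex.re ?_)
  refine (integral_integral_swap hI).trans ?_
  simp_rw [integral_const_mul, integral_mul_const, hφ]
  rw [charConv, intervalIntegral.integral_of_le zero_le_one]

/-- `charConv` is Lipschitz in the characteristic function, uniformly on bounded frequency sets. -/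
lemma norm_charConv_sub_le (m n : Measure ℝ) [IsProbabilityMeasure m] [IsProbabilityMeasure n]
    {U u b : ℝ} (hu : |u| ≤ U) (hb : ∀ v, |v| ≤ U → ‖charFun m v - charFun n v‖ ≤ b) :
    ‖charConv m u - charConv n u‖ ≤ 2 * b := by
  have hm : Continuous (charFun m) := continuous_charFun
  have hn : Continuous (charFun n) := continuous_charFun
  rw [charConv, charConv, ← intervalIntegral.integral_sub
    (Continuous.intervalIntegrable (by fun_prop) _ _)
    (Continuous.intervalIntegrable (by fun_prop) _ _)]
  have key : ∀ θ ∈ Set.uIoc (0 : ℝ) 1,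
      ‖charFun m (θ * u) * charFun m ((1 - θ) * u)
        - charFun n (θ * u) * charFun n ((1 - θ) * u)‖ ≤ 2 * b := by
    intro θ hθ
    rw [Set.uIoc_of_le zero_le_one] at hθ
    have h1 : |θ * u| ≤ U := by
      rw [abs_mul, abs_of_pos hθ.1]
      exact (mul_le_of_le_one_left (abs_nonneg u) hθ.2).trans hu
    have h2 : |(1 - θ) * u| ≤ U := by
      rw [abs_mul, abs_of_nonneg (sub_nonneg.mpr hθ.2)]
      exact (mul_le_of_le_one_left (abs_nonneg u) (by linarith [hθ.1])).trans hu
    calc _ = ‖charFun m (θ * u) * (charFun m ((1 - θ) * u) - charFun n ((1 - θ) * u))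
          + (charFun m (θ * u) - charFun n (θ * u)) * charFun n ((1 - θ) * u)‖ := by
          congr 1
          ring
      _ ≤ 1 * b + b * 1 := by
          refine (norm_add_le _ _).trans ?_
          rw [norm_mul, norm_mul]
          have hb0 : 0 ≤ b := (norm_nonneg _).trans (hb _ h1)
          gcongr
          · exact norm_charFun_le_one _
          · exact hb _ h2
          · exact hb _ h1
          · exact norm_charFun_le_one _
      _ = 2 * b := by ring
  simpa using intervalIntegral.norm_integral_le_of_norm_le_const key

lemma continuousOn_charFun_probabilityMeasure {μ : ℝ → ProbabilityMeasure ℝ} {S : Set ℝ}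
    (hμ : ContinuousOn μ S) (v : ℝ) :
    ContinuousOn (fun s => charFun (μ s : Measure ℝ) v) S := by
  intro s hs
  have h := (ProbabilityMeasure.tendsto_iff_forall_integral_rclike_tendsto ℂ).1 (hμ s hs)
    (BoundedContinuousFunction.innerProbChar v)
  simpa only [ContinuousWithinAt, charFun_eq_integral_innerProbChar] using h

lemma continuousOn_charConv {μ : ℝ → ProbabilityMeasure ℝ} {S : Set ℝ}
    (hμ : ContinuousOn μ S) (u : ℝ) :
    ContinuousOn (fun s => charConv (μ s : Measure ℝ) u) S := by
  intro s hs
  refine intervalIntegral.continuousWithinAt_of_dominated_interval (bound := fun _ => 1)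
    (.of_forall fun s => ?_) (.of_forall fun s => .of_forall fun θ _ => ?_) (by simp)
    (.of_forall fun θ _ => ?_)
  · have h : Continuous (charFun (μ s : Measure ℝ)) := continuous_charFun
    exact Continuous.aestronglyMeasurable (by fun_prop)
  · rw [norm_mul]
    exact mul_le_one₀ (norm_charFun_le_one _) (norm_nonneg _) (norm_charFun_le_one _)
  · exact (continuousOn_charFun_probabilityMeasure hμ _ s hs).mul
      (continuousOn_charFun_probabilityMeasure hμ _ s hs)

/-- A function that is `C¹` on `(0,∞)` and continuous at `0`, whose derivative has no zeros
accumulating at `0`, has an integrable derivative on `[0,T]`. -/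
lemma intervalIntegrable_deriv_of_finite_zeros {r : ℝ → ℝ} (hr : ContDiffOn ℝ 1 r (Set.Ioi 0))
    (hr0 : ContinuousWithinAt r (Set.Ici 0) 0)
    (hz : {s ∈ Set.Ioc (0 : ℝ) 1 | deriv r s = 0}.Finite) {T : ℝ} (hT : 0 ≤ T) :
    IntervalIntegrable (deriv r) volume 0 T := by
  have hdc : ContinuousOn (deriv r) (Set.Ioi 0) := hr.continuousOn_deriv_of_isOpen isOpen_Ioi le_rfl
  have hda : ∀ x, 0 < x → HasDerivAt r (deriv r x) x := fun x hx =>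
    ((hr.differentiableOn one_ne_zero).differentiableAt (isOpen_Ioi.mem_nhds hx)).hasDerivAt
  have hrc : ContinuousOn r (Set.Ici 0) := by
    intro x hx
    rcases (Set.mem_Ici.mp hx).eq_or_lt with rfl | h
    · exact hr0
    · exact (hda x h).continuousAt.continuousWithinAt
  obtain ⟨ε, hε, hball⟩ := Metric.isOpen_iff.1 hz.isClosed.isOpen_compl 0 (by simp)
  set δ := min (ε / 2) 1
  have hδ0 : 0 < δ := by positivity
  have hne : ∀ x ∈ Set.Ioo 0 δ, deriv r x ≠ 0 := by
    intro x hx h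
    have h1 : x < 1 := hx.2.trans_le (min_le_right _ _)
    have h2 : x < ε := (hx.2.trans_le (min_le_left _ _)).trans (by linarith)
    exact hball (by simpa [abs_of_pos hx.1] using h2) ⟨⟨hx.1, h1.le⟩, h⟩
  have hnear : IntervalIntegrable (deriv r) volume 0 δ := by
    have hsign : (∀ x ∈ Set.Ioo 0 δ, 0 ≤ deriv r x) ∨ ∀ x ∈ Set.Ioo 0 δ, deriv r x ≤ 0 := by
      by_contra! h
      obtain ⟨⟨x, hx, hx'⟩, y, hy, hy'⟩ := h
      obtain ⟨z, hz, hz'⟩ := isPreconnected_Ioo.intermediate_value hx hy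
        (hdc.mono fun w hw => hw.1) ⟨hx'.le, hy'.le⟩
      exact hne z hz hz'
    have hcI : ContinuousOn r (Set.uIcc 0 δ) := by
      rw [Set.uIcc_of_le hδ0.le]
      exact hrc.mono fun w hw => hw.1
    rcases hsign with h | h
    · refine intervalIntegral.intervalIntegrable_deriv_of_nonneg hcI ?_ ?_ <;>
        rw [min_eq_left hδ0.le, max_eq_right hδ0.le]
      exacts [fun x hx => hda x hx.1, h]
    · rw [← neg_neg (deriv r)]
      refine (intervalIntegral.intervalIntegrable_deriv_of_nonneg hcI.neg ?_ ?_).neg <;>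
        rw [min_eq_left hδ0.le, max_eq_right hδ0.le]
      exacts [fun x hx => (hda x hx.1).neg, fun x hx => neg_nonneg.mpr (h x hx)]
  rcases le_total T δ with h | h
  · refine hnear.mono_set ?_
    rw [Set.uIcc_of_le hT, Set.uIcc_of_le hδ0.le]
    exact Set.Icc_subset_Icc_right h
  · refine hnear.trans (ContinuousOn.intervalIntegrable (hdc.mono fun x hx => ?_))
    rw [Set.uIcc_of_le h] at hx
    exact hδ0.trans_le hx.1

/-- Integrating a power of a primitive against its own density. -/
lemma integral_mul_primitive_pow {g : ℝ → ℝ} (hg : ContinuousOn g (Set.Ioi 0)) {t : ℝ}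
    (ht : 0 ≤ t) (hi : IntervalIntegrable g volume 0 t) (n : ℕ) :
    IntervalIntegrable (fun s => g s * (∫ w in (0 : ℝ)..s, g w) ^ n) volume 0 t ∧
    ∫ s in (0 : ℝ)..t, g s * (∫ w in (0 : ℝ)..s, g w) ^ n
      = (∫ w in (0 : ℝ)..t, g w) ^ (n + 1) / (n + 1) := by
  have hc : ContinuousOn (fun s => ∫ w in (0 : ℝ)..s, g w) (Set.uIcc 0 t) :=
    intervalIntegral.continuousOn_primitive_interval' hi Set.left_mem_uIcc
  have hint : IntervalIntegrable (fun s => g s * (∫ w in (0 : ℝ)..s, g w) ^ n) volume 0 t :=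
    hi.mul_continuousOn (hc.pow n)
  refine ⟨hint, ?_⟩
  have hn : (n : ℝ) + 1 ≠ 0 := by positivity
  rw [Set.uIcc_of_le ht] at hc
  rw [intervalIntegral.integral_eq_sub_of_hasDerivAt_of_le
    (f := fun s => (∫ w in (0 : ℝ)..s, g w) ^ (n + 1) / (n + 1)) ht
    ((hc.pow (n + 1)).div_const _) ?_ hint]
  · simp
  · intro x hx
    have hix : IntervalIntegrable g volume 0 x := hi.mono_set (by
      rw [Set.uIcc_of_le ht, Set.uIcc_of_le hx.1.le]
      exact Set.Icc_subset_Icc_right hx.2.le)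
    have hd := intervalIntegral.integral_hasDerivAt_right hix
      (hg.stronglyMeasurableAtFilter isOpen_Ioi x hx.1) (hg.continuousAt (isOpen_Ioi.mem_nhds hx.1))
    convert! (hd.pow (n + 1)).div_const ((n : ℝ) + 1) using 1
    push_cast
    field_simp

/-- A solution of the flow equation, tested against trigonometric functions. -/
lemma SolvesFlow.re_charFun {R : ℝ → ℝ → ℝ} {μ : ℝ → ProbabilityMeasure ℝ}
    (hμ : SolvesFlow R μ) {t : ℝ} (ht : 0 ≤ t) (c : ℂ) (u : ℝ) :
    (c * charFun (μ t : Measure ℝ) u).re = (c * charFun (μ 0 : Measure ℝ) u).re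
      + (1 / 2) * ∫ s in (0 : ℝ)..t, deriv (fun w => R w w) s *
          (c * (u * Complex.I) ^ 2 * charConv (μ s : Measure ℝ) u).re := by
  simpa only [integral_trigRe, integral_integral_diffQuot_trigRe] using
    hμ t ht _ (isCb3_trigRe c u)

/-- One step of the Picard iteration for two solutions with the same initial value. -/
lemma SolvesFlow.norm_charFun_sub_le {R : ℝ → ℝ → ℝ} {μ ν : ℝ → ProbabilityMeasure ℝ}
    (hμc : ContinuousOn μ (Set.Ici 0)) (hνc : ContinuousOn ν (Set.Ici 0))
    (hμ : SolvesFlow R μ) (hν : SolvesFlow R ν) (h0 : μ 0 = ν 0) {t : ℝ} (ht : 0 ≤ t)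
    (hi : IntervalIntegrable (deriv fun w => R w w) volume 0 t) {U u : ℝ} (hu : |u| ≤ U)
    {b : ℝ → ℝ} (hbi : IntervalIntegrable (fun s => |deriv (fun w => R w w) s| * b s) volume 0 t)
    (hb : ∀ s ∈ Set.Ioc 0 t, ∀ v, |v| ≤ U →
      ‖charFun (μ s : Measure ℝ) v - charFun (ν s : Measure ℝ) v‖ ≤ b s) :
    ‖charFun (μ t : Measure ℝ) u - charFun (ν t : Measure ℝ) u‖
      ≤ 2 * U ^ 2 * ∫ s in (0 : ℝ)..t, |deriv (fun w => R w w) s| * b s := by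
  set g := deriv fun w => R w w with hg
  have hII : ∀ κ : ℝ → ProbabilityMeasure ℝ, ContinuousOn κ (Set.Ici 0) → ∀ c : ℂ,
      IntervalIntegrable (fun s => g s *
        (c * (u * Complex.I) ^ 2 * charConv (κ s : Measure ℝ) u).re) volume 0 t := by
    intro κ hκ c
    refine hi.mul_continuousOn ?_
    rw [Set.uIcc_of_le ht]
    exact Complex.continuous_re.comp_continuousOn
      (continuousOn_const.mul ((continuousOn_charConv hκ u).mono Set.Icc_subset_Ici_self))
  have hre : ∀ c : ℂ, ‖c‖ = 1 →
      |(c * (charFun (μ t : Measure ℝ) u - charFun (ν t : Measure ℝ) u)).re|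
        ≤ U ^ 2 * ∫ s in (0 : ℝ)..t, |g s| * b s := by
    intro c hc
    rw [mul_sub, Complex.sub_re, hμ.re_charFun ht, hν.re_charFun ht, h0, add_sub_add_left_eq_sub,
      ← mul_sub, ← intervalIntegral.integral_sub (hII μ hμc c) (hII ν hνc c), abs_mul]
    have hU : u ^ 2 ≤ U ^ 2 := sq_le_sq' (neg_le_of_abs_le hu) (le_of_abs_le hu)
    have hle : ∀ s ∈ Set.Ioc 0 t,
        ‖g s * (c * (u * Complex.I) ^ 2 * charConv (μ s : Measure ℝ) u).re
          - g s * (c * (u * Complex.I) ^ 2 * charConv (ν s : Measure ℝ) u).re‖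
        ≤ 2 * U ^ 2 * (|g s| * b s) := by
      intro s hs
      rw [← mul_sub, ← Complex.sub_re, ← mul_sub, norm_mul, Real.norm_eq_abs, Real.norm_eq_abs]
      have h1 := norm_charConv_sub_le (μ s : Measure ℝ) (ν s : Measure ℝ) hu (hb s hs)
      have h2 : |(c * (u * Complex.I) ^ 2 *
          (charConv (μ s : Measure ℝ) u - charConv (ν s : Measure ℝ) u)).re|
          ≤ U ^ 2 * (2 * b s) := by
        refine (Complex.abs_re_le_norm _).trans ?_
        rw [norm_mul, norm_mul, norm_pow, norm_mul, hc, Complex.norm_I, Complex.norm_real,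
          Real.norm_eq_abs, mul_one, one_mul, sq_abs]
        gcongr
      calc _ ≤ |g s| * (U ^ 2 * (2 * b s)) := by gcongr
        _ = _ := by ring
    have := intervalIntegral.norm_integral_le_of_norm_le ht (.of_forall hle)
      (hbi.const_mul (2 * U ^ 2))
    rw [intervalIntegral.integral_const_mul, Real.norm_eq_abs] at this
    rw [abs_of_pos (by norm_num : (0 : ℝ) < 1 / 2)]
    linarith
  have hr := hre 1 (by simp)
  have hI := hre (-Complex.I) (by simp)
  refine (Complex.norm_le_abs_re_add_abs_im _).trans ?_
  simp only [one_mul] at hr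
  have : ∀ w : ℂ, (-Complex.I * w).re = w.im := fun w => by simp
  rw [this] at hI
  linarith

/-- **Uniqueness for the measure-flow equation.** Under condition (H1), two weakly continuous
families of Borel probability measures on `ℝ` solving the measure-flow equation for `R` with the
same initial value coincide for all `t ≥ 0`. -/
theorem flow_equation_uniqueness
    (R : ℝ → ℝ → ℝ) (hR : CondH1 R)
    (μ ν : ℝ → ProbabilityMeasure ℝ)
    (hμc : ContinuousOn μ (Set.Ici 0)) (hνc : ContinuousOn ν (Set.Ici 0))
    (hμ : SolvesFlow R μ) (hν : SolvesFlow R ν)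
    (h0 : μ 0 = ν 0) :
    ∀ t ≥ (0 : ℝ), μ t = ν t := by
  intro t ht
  set g := deriv fun w => R w w with hg
  have hgi : ∀ {T : ℝ}, 0 ≤ T → IntervalIntegrable g volume 0 T := fun hT =>
    intervalIntegrable_deriv_of_finite_zeros hR.1 hR.2.1 (hR.2.2.1 1 one_pos) hT
  have hgc : ContinuousOn (fun s => |g s|) (Set.Ioi 0) :=
    (hR.1.continuousOn_deriv_of_isOpen isOpen_Ioi le_rfl).abs
  set a : ℝ → ℝ := fun s => ∫ w in (0 : ℝ)..s, |g w|
  have key : ∀ U : ℝ, ∀ n : ℕ, ∀ s, 0 ≤ s → ∀ v, |v| ≤ U →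
      ‖charFun (μ s : Measure ℝ) v - charFun (ν s : Measure ℝ) v‖
        ≤ 2 * ((2 * U ^ 2 * a s) ^ n / n.factorial) := by
    intro U n
    induction n with
    | zero =>
      intro s _ v _
      refine (norm_sub_le _ _).trans ?_
      have h1 := norm_charFun_le_one (μ := (μ s : Measure ℝ)) v
      have h2 := norm_charFun_le_one (μ := (ν s : Measure ℝ)) v
      simp only [pow_zero, Nat.factorial_zero, Nat.cast_one, div_one]
      linarith
    | succ n ih =>
      intro s hs v hv
      obtain ⟨hint, hval⟩ := integral_mul_primitive_pow hgc hs (hgi hs).abs n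
      have hrw : (fun w => |g w| * (2 * ((2 * U ^ 2 * a w) ^ n / n.factorial)))
          = fun w => (2 * (2 * U ^ 2) ^ n / n.factorial) * (|g w| * a w ^ n) := by
        funext w
        rw [mul_pow]
        ring
      have hstep := SolvesFlow.norm_charFun_sub_le hμc hνc hμ hν h0 hs (hgi hs) hv
        (b := fun w => 2 * ((2 * U ^ 2 * a w) ^ n / n.factorial))
        (by
          rw [← hg, hrw]
          exact hint.const_mul _)
        (fun w hw v hv => ih w hw.1.le v hv)
      refine hstep.trans_eq ?_
      rw [← hg, hrw, intervalIntegral.integral_const_mul, hval, Nat.factorial_succ]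
      push_cast
      field_simp
      rw [mul_pow (2 * U ^ 2) (a s), pow_succ' (2 * U ^ 2)]
  suffices h : (μ t : Measure ℝ) = (ν t : Measure ℝ) from Subtype.ext h
  refine Measure.ext_of_charFun (funext fun u => ?_)
  have hlim : Filter.Tendsto (fun n : ℕ => 2 * ((2 * |u| ^ 2 * a t) ^ n / n.factorial))
      Filter.atTop (nhds (2 * 0)) :=
    (FloorSemiring.tendsto_pow_div_factorial_atTop _).const_mul 2
  rw [mul_zero] at hlim
  have := ge_of_tendsto' hlim fun n => key |u| n t ht u le_rfl
  exact sub_eq_zero.mp (norm_le_zero_iff.mp this)
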